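/- Let X and X' be independent and identically distributed random vectors in ℝ^d with E‖X‖ < ∞. Then X is equal in distribution to −X if and only if E‖X + X'‖ = E‖X − X'‖ (here ‖·‖ is the Euclidean norm). Consequently, the hypothesis of diagonal symmetry H₀: X =_D −X is equivalent to the hypothesis H₀': E[‖X + X'‖ − ‖X − X'‖] = 0. -/

import Mathlib

open MeasureTheory ProbabilityTheory

section Helpers

variable {V : Type*} [NormedAddCommGroup V] [InnerProductSpace ℝ V] [FiniteDimensional ℝ V]
  [MeasurableSpace V] [BorelSpace V]

lemma aux_gauss_integrable : Integrable (fun v : V => Real.exp (-‖v‖ ^ 2)) := by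
  have h := GaussianFourier.integrable_cexp_neg_mul_sq_norm_add (V := V) (b := 1) (by simp) 0 0
  have h2 := h.norm
  refine h2.congr (Filter.Eventually.of_forall fun v => ?_)
  simp only [Complex.norm_exp]
  congr 1
  simp [← Complex.ofReal_pow]

lemma aux_gauss : ∃ K : ℝ, 0 < K ∧ ∀ w : V,
    ∫ v : V, Real.exp (-‖v‖ ^ 2) * Real.cos (inner ℝ w v) = K * Real.exp (-‖w‖ ^ 2 / 4) := by
  refine ⟨Real.pi ^ (Module.finrank ℝ V / 2 : ℝ), by positivity, fun w => ?_⟩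
  have h := GaussianFourier.integral_cexp_neg_mul_sq_norm_add (V := V) (b := 1) (by simp) Complex.I w
  have hi := GaussianFourier.integrable_cexp_neg_mul_sq_norm_add (V := V) (b := 1) (by simp) Complex.I w
  have h2 := congrArg Complex.re h
  have h3 := integral_re hi
  change ∫ v : V, (Complex.exp (-1 * (‖v‖ : ℂ) ^ 2 + Complex.I * ((inner ℝ w v : ℝ) : ℂ))).re =
    (∫ v : V, Complex.exp (-1 * (‖v‖ : ℂ) ^ 2 + Complex.I * ((inner ℝ w v : ℝ) : ℂ))).re at h3
  rw [← h3] at h2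
  have e1 : ∀ v : V, (Complex.exp (-1 * (‖v‖ : ℂ) ^ 2 + Complex.I * ((inner ℝ w v : ℝ) : ℂ))).re
      = Real.exp (-‖v‖ ^ 2) * Real.cos (inner ℝ w v) := by
    intro v
    rw [Complex.exp_re]
    simp [← Complex.ofReal_pow]
  simp only [e1] at h2
  rw [h2]
  have e2 : ((Real.pi : ℂ) / 1) ^ ((Module.finrank ℝ V : ℂ) / 2) *
      Complex.exp (Complex.I ^ 2 * (‖w‖ : ℂ) ^ 2 / (4 * 1)) =
      ((Real.pi ^ (Module.finrank ℝ V / 2 : ℝ) * Real.exp (-‖w‖ ^ 2 / 4) : ℝ) : ℂ) := by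
    push_cast [Complex.ofReal_cpow Real.pi_pos.le]
    simp
  rw [e2, Complex.ofReal_re]

lemma aux_h_int : Integrable (fun u : ℝ => (1 - Real.exp (-u ^ 2 / 4)) / u ^ 2) := by
  refine (integrable_inv_one_add_sq.const_mul 2).mono' ?_ ?_
  · exact Measurable.aestronglyMeasurable (by fun_prop)
  · refine Filter.Eventually.of_forall fun u => ?_
    have h1 : Real.exp (-u ^ 2 / 4) ≤ 1 := Real.exp_le_one_iff.2 (by nlinarith [sq_nonneg u])
    have h2 := Real.add_one_le_exp (-u ^ 2 / 4)
    have h3 := Real.exp_pos (-u ^ 2 / 4)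
    rw [Real.norm_of_nonneg (div_nonneg (by linarith) (sq_nonneg u))]
    by_cases hu : u = 0
    · subst hu; simp
    have hu2 : 0 < u ^ 2 := by positivity
    rw [← div_eq_mul_inv, div_le_div_iff₀ hu2 (by positivity)]
    nlinarith [mul_pos h3 hu2]

lemma aux_h_eq (r u : ℝ) : (1 - Real.exp (-(u ^ 2 * r ^ 2) / 4)) / u ^ 2 =
    r ^ 2 * ((1 - Real.exp (-(r * u) ^ 2 / 4)) / (r * u) ^ 2) := by
  by_cases hr : r = 0
  · subst hr; simp
  by_cases hu : u = 0
  · subst hu; simp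
  rw [mul_pow, mul_comm (u ^ 2)]
  field_simp

lemma aux_h_scale_int (r : ℝ) :
    Integrable (fun u : ℝ => (1 - Real.exp (-(u ^ 2 * r ^ 2) / 4)) / u ^ 2) := by
  simp only [aux_h_eq r]
  by_cases hr : r = 0
  · subst hr; simp
  exact (aux_h_int.comp_mul_left' hr).const_mul _

lemma aux_h_scale (r : ℝ) (hr : 0 ≤ r) :
    ∫ u : ℝ, (1 - Real.exp (-(u ^ 2 * r ^ 2) / 4)) / u ^ 2 =
      r * ∫ u : ℝ, (1 - Real.exp (-u ^ 2 / 4)) / u ^ 2 := by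
  simp only [aux_h_eq r]
  rw [integral_const_mul,
    Measure.integral_comp_mul_left (fun u : ℝ => (1 - Real.exp (-u ^ 2 / 4)) / u ^ 2)]
  by_cases h : r = 0
  · subst h; simp
  rw [abs_of_nonneg (by positivity), smul_eq_mul]
  field_simp

lemma aux_h_nonneg (r u : ℝ) : 0 ≤ (1 - Real.exp (-(u ^ 2 * r ^ 2) / 4)) / u ^ 2 := by
  have : Real.exp (-(u ^ 2 * r ^ 2) / 4) ≤ 1 :=
    Real.exp_le_one_iff.2 (by nlinarith [mul_nonneg (sq_nonneg u) (sq_nonneg r)])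
  exact div_nonneg (by linarith) (sq_nonneg u)

/-- joint integrability of the kernel -/
lemma aux_joint {α : Type*} [MeasurableSpace α] (P : Measure α) [IsProbabilityMeasure P]
    (R : α → ℝ) (hR : Measurable R) (hR0 : ∀ a, 0 ≤ R a) (hRi : Integrable R P) :
    Integrable (fun p : α × ℝ => (1 - Real.exp (-(p.2 ^ 2 * R p.1 ^ 2) / 4)) / p.2 ^ 2)
      (P.prod volume) := by
  have hmeas : Measurable
      (fun p : α × ℝ => (1 - Real.exp (-(p.2 ^ 2 * R p.1 ^ 2) / 4)) / p.2 ^ 2) := by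
    fun_prop
  rw [integrable_prod_iff hmeas.aestronglyMeasurable]
  have hn : ∀ a, ∫ u : ℝ, ‖(1 - Real.exp (-(u ^ 2 * R a ^ 2) / 4)) / u ^ 2‖ =
      R a * ∫ u : ℝ, (1 - Real.exp (-u ^ 2 / 4)) / u ^ 2 := by
    intro a
    rw [← aux_h_scale (R a) (hR0 a)]
    congr 1
    ext u
    rw [Real.norm_of_nonneg (aux_h_nonneg (R a) u)]
  constructor
  · exact Filter.Eventually.of_forall fun a => aux_h_scale_int (R a)
  · simp only [hn]
    exact hRi.mul_const _

/-- two nonnegative variables with equal means: comparison of Gaussian transforms -/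
lemma aux_exists {α : Type*} [MeasurableSpace α] (P : Measure α) [IsProbabilityMeasure P]
    (R S : α → ℝ) (hR : Measurable R) (hR0 : ∀ a, 0 ≤ R a) (hRi : Integrable R P)
    (hS : Measurable S) (hS0 : ∀ a, 0 ≤ S a) (hSi : Integrable S P)
    (heq : ∫ a, R a ∂P = ∫ a, S a ∂P)
    (hpos : ∀ u : ℝ, 0 ≤ ∫ a, (Real.exp (-(u ^ 2 * S a ^ 2) / 4)
      - Real.exp (-(u ^ 2 * R a ^ 2) / 4)) ∂P) :
    ∃ u : ℝ, u ≠ 0 ∧ ∫ a, (Real.exp (-(u ^ 2 * S a ^ 2) / 4)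
      - Real.exp (-(u ^ 2 * R a ^ 2) / 4)) ∂P = 0 := by
  have hj : Integrable (Function.uncurry
      fun (a : α) (u : ℝ) => (1 - Real.exp (-(u ^ 2 * R a ^ 2) / 4)) / u ^ 2
      - (1 - Real.exp (-(u ^ 2 * S a ^ 2) / 4)) / u ^ 2) (P.prod volume) := by
    refine ((aux_joint P R hR hR0 hRi).sub (aux_joint P S hS hS0 hSi)).congr
      (Filter.Eventually.of_forall fun p => ?_)
    simp only [Pi.sub_apply, Function.uncurry]
  have hsw := integral_integral_swap (μ := P) (ν := (volume : Measure ℝ))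
    (f := fun (a : α) (u : ℝ) => (1 - Real.exp (-(u ^ 2 * R a ^ 2) / 4)) / u ^ 2
      - (1 - Real.exp (-(u ^ 2 * S a ^ 2) / 4)) / u ^ 2) hj
  have hl : ∫ a, (∫ u : ℝ, ((1 - Real.exp (-(u ^ 2 * R a ^ 2) / 4)) / u ^ 2
      - (1 - Real.exp (-(u ^ 2 * S a ^ 2) / 4)) / u ^ 2)) ∂P = 0 := by
    have : ∀ a, ∫ u : ℝ, ((1 - Real.exp (-(u ^ 2 * R a ^ 2) / 4)) / u ^ 2
      - (1 - Real.exp (-(u ^ 2 * S a ^ 2) / 4)) / u ^ 2) =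
        (R a - S a) * ∫ u : ℝ, (1 - Real.exp (-u ^ 2 / 4)) / u ^ 2 := by
      intro a
      rw [integral_sub (aux_h_scale_int _) (aux_h_scale_int _), aux_h_scale _ (hR0 a),
        aux_h_scale _ (hS0 a), sub_mul]
    simp only [this]
    rw [integral_mul_const, integral_sub hRi hSi, heq]
    simp
  rw [hl] at hsw
  have hin : ∀ u : ℝ, ∫ a, ((1 - Real.exp (-(u ^ 2 * R a ^ 2) / 4)) / u ^ 2
      - (1 - Real.exp (-(u ^ 2 * S a ^ 2) / 4)) / u ^ 2) ∂P =
      (∫ a, (Real.exp (-(u ^ 2 * S a ^ 2) / 4)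
      - Real.exp (-(u ^ 2 * R a ^ 2) / 4)) ∂P) / u ^ 2 := by
    intro u
    rw [← integral_div]
    congr 1
    ext a
    ring
  have hji : Integrable (fun u : ℝ => ∫ a, ((1 - Real.exp (-(u ^ 2 * R a ^ 2) / 4)) / u ^ 2
      - (1 - Real.exp (-(u ^ 2 * S a ^ 2) / 4)) / u ^ 2) ∂P) := hj.integral_prod_right
  have hz := (integral_eq_zero_iff_of_nonneg (fun u => by
    simp only [hin, Pi.zero_apply]
    exact div_nonneg (hpos u) (sq_nonneg u)) hji).1 hsw.symm
  have hne : ∀ᵐ u : ℝ, u ≠ 0 := by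
    simp [ae_iff]
  obtain ⟨u, h1, h2⟩ := (hz.and hne).exists
  refine ⟨u, h2, ?_⟩
  simp only [hin, Pi.zero_apply] at h1
  have : u ^ 2 ≠ 0 := by positivity
  exact (div_eq_zero_iff.1 h1).resolve_right this

lemma aux_fubini : ∃ K : ℝ, 0 < K ∧ ∀ (m : Measure V) [IsProbabilityMeasure m] (u : ℝ),
    K * ∫ p : V × V, (Real.exp (-(u ^ 2 * ‖p.1 - p.2‖ ^ 2) / 4)
      - Real.exp (-(u ^ 2 * ‖p.1 + p.2‖ ^ 2) / 4)) ∂(m.prod m) =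
    ∫ v : V, 2 * Real.exp (-‖v‖ ^ 2) * (∫ x, Real.sin (u * inner ℝ x v) ∂m) ^ 2 := by
  obtain ⟨K, hK, hg⟩ := aux_gauss (V := V)
  refine ⟨K, hK, fun m _ u => ?_⟩
  have hgi : ∀ w : V, Integrable
      (fun v : V => Real.exp (-‖v‖ ^ 2) * Real.cos (inner ℝ w v)) := fun w => by
    refine aux_gauss_integrable.mul_bdd (c := 1) (by fun_prop) ?_
    exact Filter.Eventually.of_forall fun v => by simpa using Real.abs_cos_le_one _
  have hp : ∀ p : V × V, K * (Real.exp (-(u ^ 2 * ‖p.1 - p.2‖ ^ 2) / 4)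
      - Real.exp (-(u ^ 2 * ‖p.1 + p.2‖ ^ 2) / 4)) =
      ∫ v : V, 2 * Real.exp (-‖v‖ ^ 2) *
        (Real.sin (u * inner ℝ p.1 v) * Real.sin (u * inner ℝ p.2 v)) := by
    intro p
    have h1 := hg (u • (p.1 - p.2))
    have h2 := hg (u • (p.1 + p.2))
    rw [norm_smul, mul_pow, Real.norm_eq_abs, sq_abs] at h1 h2
    rw [mul_sub, ← h1, ← h2, ← integral_sub (hgi _) (hgi _)]
    congr 1
    ext v
    simp only [inner_smul_left, inner_sub_left, inner_add_left, mul_add, mul_sub,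
      Real.cos_add, Real.cos_sub, conj_trivial]
    ring
  rw [← integral_const_mul]
  simp only [hp]
  rw [integral_integral_swap (μ := m.prod m) (ν := (volume : Measure V))
    (f := fun (p : V × V) (v : V) => 2 * Real.exp (-‖v‖ ^ 2) *
        (Real.sin (u * inner ℝ p.1 v) * Real.sin (u * inner ℝ p.2 v)))]
  · congr 1
    ext v
    rw [integral_const_mul]
    congr 1
    exact (integral_prod_mul (μ := m) (ν := m) (fun x => Real.sin (u * inner ℝ x v))
      (fun x => Real.sin (u * inner ℝ x v))).trans (sq _).symm
  · have h := (integrable_const (μ := m.prod m) (2 : ℝ)).mul_prod (aux_gauss_integrable (V := V))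
    refine h.mul_bdd (c := 1) (Measurable.aestronglyMeasurable (by fun_prop)) ?_
    refine Filter.Eventually.of_forall fun q => ?_
    rw [norm_mul]
    exact mul_le_one₀ (by simpa using Real.abs_sin_le_one _) (norm_nonneg _)
      (by simpa using Real.abs_sin_le_one _)

lemma aux_sin_zero (m : Measure V) [IsProbabilityMeasure m] (u : ℝ) (hu : u ≠ 0)
    (h : ∫ v : V, 2 * Real.exp (-‖v‖ ^ 2) * (∫ x, Real.sin (u * inner ℝ x v) ∂m) ^ 2 = 0) (t : V) :
    ∫ x, Real.sin (inner ℝ x t) ∂m = 0 := by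
  have hc : Continuous (fun v : V => ∫ x, Real.sin (u * inner ℝ x v) ∂m) := by
    refine continuous_of_dominated (bound := fun _ => 1) ?_ ?_ (integrable_const _) ?_
    · intro v; exact Measurable.aestronglyMeasurable (by fun_prop)
    · intro v
      exact Filter.Eventually.of_forall fun x => by simpa using Real.abs_sin_le_one _
    · exact Filter.Eventually.of_forall fun x => by fun_prop
  have hb : ∀ v : V, ‖(∫ x, Real.sin (u * inner ℝ x v) ∂m) ^ 2‖ ≤ 1 := by
    intro v
    rw [norm_pow]
    refine pow_le_one₀ (norm_nonneg _) ?_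
    have := norm_integral_le_of_norm_le_const (μ := m) (f := fun x => Real.sin (u * inner ℝ x v))
      (C := 1) (Filter.Eventually.of_forall fun x => by simpa using Real.abs_sin_le_one _)
    simpa using this
  have hi : Integrable (fun v : V => 2 * Real.exp (-‖v‖ ^ 2) *
      (∫ x, Real.sin (u * inner ℝ x v) ∂m) ^ 2) :=
    (aux_gauss_integrable.const_mul 2).mul_bdd (c := 1) (hc.pow 2).aestronglyMeasurable
      (Filter.Eventually.of_forall hb)
  have hz := (integral_eq_zero_iff_of_nonneg (fun v => by
    simp only [Pi.zero_apply]; positivity) hi).1 h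
  have hz2 := (Continuous.ae_eq_iff_eq (volume : Measure V) (by fun_prop)
    continuous_const).1 hz
  have h3 := congrFun hz2 (u⁻¹ • t)
  simp only [inner_smul_right] at h3
  have h4 : ∀ x : V, u * (u⁻¹ * inner ℝ x t) = inner ℝ x t := fun x => by field_simp
  simp only [h4] at h3
  have : 2 * Real.exp (-‖u⁻¹ • t‖ ^ 2) ≠ 0 := by positivity
  exact pow_eq_zero_iff two_ne_zero |>.1 ((mul_eq_zero.1 h3).resolve_left this)

lemma aux_symm (m : Measure V) [IsProbabilityMeasure m]
    (h : ∀ t : V, ∫ x, Real.sin (inner ℝ x t) ∂m = 0) : m = m.map (fun x => -x) := by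
  have : IsProbabilityMeasure (m.map (fun x : V => -x)) :=
    Measure.isProbabilityMeasure_map (by fun_prop)
  apply Measure.ext_of_charFun
  ext t
  have e : charFun (m.map (fun x : V => -x)) t = charFun m (-t) := by
    rw [charFun_apply, charFun_apply, integral_map (by fun_prop)
      (Measurable.aestronglyMeasurable (by fun_prop))]
    simp
  rw [e, charFun_neg, eq_comm, Complex.conj_eq_iff_im, charFun_apply]
  have hi : Integrable (fun x : V => Complex.exp ((inner ℝ x t : ℝ) * Complex.I)) m := by
    refine (integrable_const (1 : ℝ)).mono' (Measurable.aestronglyMeasurable (by fun_prop)) ?_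
    exact Filter.Eventually.of_forall fun x => by simp [Complex.norm_exp_ofReal_mul_I]
  have h3 := integral_im hi
  change _ = (∫ x : V, Complex.exp ((inner ℝ x t : ℝ) * Complex.I) ∂m).im at h3
  rw [← h3]
  change ∫ x : V, (Complex.exp ((inner ℝ x t : ℝ) * Complex.I)).im ∂m = 0
  simp only [Complex.exp_ofReal_mul_I_im]
  exact h t

lemma aux_main (m : Measure V) [IsProbabilityMeasure m] (hm : Integrable (fun x => ‖x‖) m) :
    m = m.map (fun x => -x) ↔
      ∫ p : V × V, ‖p.1 + p.2‖ ∂(m.prod m) = ∫ p : V × V, ‖p.1 - p.2‖ ∂(m.prod m) := by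
  have hid : Integrable (fun x : V => x) m :=
    (integrable_norm_iff (by fun_prop)).1 hm
  have h1 : Integrable (fun p : V × V => p.1) (m.prod m) := hid.comp_fst m
  have h2 : Integrable (fun p : V × V => p.2) (m.prod m) := hid.comp_snd m
  constructor
  · intro h
    have hmp : MeasurePreserving (fun x : V => -x) m m := ⟨by fun_prop, h.symm⟩
    have h5 := (MeasurePreserving.id m).prod hmp
    have h6 := integral_map (μ := m.prod m) h5.measurable.aemeasurable
      (f := fun p : V × V => ‖p.1 + p.2‖) (Measurable.aestronglyMeasurable (by fun_prop))
    rw [h5.map_eq] at h6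
    rw [h6]
    simp [Prod.map, sub_eq_add_neg]
  · intro h
    obtain ⟨K, hK, hf⟩ := aux_fubini (V := V)
    obtain ⟨u, hu, h0⟩ := aux_exists (m.prod m) (fun p => ‖p.1 + p.2‖) (fun p => ‖p.1 - p.2‖)
      (by fun_prop) (fun _ => norm_nonneg _) (h1.add h2).norm
      (by fun_prop) (fun _ => norm_nonneg _) (h1.sub h2).norm h (fun u => by
        refine (mul_nonneg_iff_of_pos_left hK).1 ?_
        rw [hf m u]
        exact integral_nonneg fun v => by simp only [Pi.zero_apply]; positivity)
    have h3 := hf m u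
    rw [h0, mul_zero] at h3
    exact aux_symm m (aux_sin_zero m u hu h3.symm)

end Helpers

open MeasureTheory ProbabilityTheory

/-- If `X` and `X'` are i.i.d. random vectors in `ℝ^d` with `E‖X‖ < ∞`,
then `X` is equal in distribution to `-X` if and only if
`E‖X + X'‖ = E‖X - X'‖`.  Hence the diagonal symmetry hypothesis
`H₀ : X =_D -X` is equivalent to `H₀' : E[‖X + X'‖ - ‖X - X'‖] = 0`. -/
theorem energy_characterization_of_diagonal_symmetry
    {Ω : Type*} [MeasurableSpace Ω] (μ : Measure Ω) [IsProbabilityMeasure μ]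
    (d : ℕ) (X X' : Ω → EuclideanSpace ℝ (Fin d))
    (hX : Measurable X) (hX' : Measurable X')
    (hident : Measure.map X' μ = Measure.map X μ)
    (hindep : IndepFun X X' μ)
    (hint : Integrable (fun ω => ‖X ω‖) μ) :
    Measure.map X μ = Measure.map (fun ω => -X ω) μ ↔
      ∫ ω, ‖X ω + X' ω‖ ∂μ = ∫ ω, ‖X ω - X' ω‖ ∂μ := by
  have hP : IsProbabilityMeasure (Measure.map X μ) :=
    Measure.isProbabilityMeasure_map hX.aemeasurable
  have hprod := hindep.map_prod_eq_prod_map_map hX.aemeasurable hX'.aemeasurable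
  rw [hident] at hprod
  have hm : Integrable (fun x => ‖x‖) (Measure.map X μ) :=
    (integrable_map_measure (by fun_prop) hX.aemeasurable).2 hint
  have hmain := aux_main (Measure.map X μ) hm
  rw [← hprod, integral_map (by fun_prop) (Measurable.aestronglyMeasurable (by fun_prop)),
    integral_map (by fun_prop) (Measurable.aestronglyMeasurable (by fun_prop)),
    Measure.map_map (by fun_prop) hX] at hmain
  exact hmain
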